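/- arXiv:2110.02853 — 2 statements merged into one kernel-verified Lean document; each statement's English description precedes it below -/
import Mathlib

section
/- Let c ∈ ℂ and φ_c(w) = −exp(−2πi(w + τ − c)). Every holomorphic function F : ℂ → Mat_n(ℂ) satisfying F(w+1) = X F(w) X^{−1} and F(w+τ) = φ_c(w) · Y F(w) Y^{−1} for all w ∈ ℂ can be written uniquely as F(w) = ∑_{(k,l) ∈ {1,…,n}²} λ_{(k,l)} · f_{(k,l)}(w) · Z_{(k,l)} with coefficients λ_{(k,l)} ∈ ℂ, where f_{(k,l)}(w) = exp(−2πi d k w / n) · θ(w + (1+τ)/2 − c − (d/n)(kτ − l)); in particular the ℂ-vector space of such functions F has dimension n². -/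
open Complex Matrix
open scoped Kronecker

noncomputable section

/-- `ε = exp(2πi d/n)`. -/
def eps (n d : ℕ) : ℂ := Complex.exp (2 * Real.pi * Complex.I * d / n)

/-- The diagonal matrix `X = diag(1, ε, ε², …, ε^{n−1})`. -/
def Xmat (n d : ℕ) : Matrix (Fin n) (Fin n) ℂ :=
  Matrix.diagonal fun i => eps n d ^ (i : ℕ)

/-- The cyclic shift matrix `Y` with `Y_{i,j} = 1` iff `j ≡ i+1 (mod n)`. -/
def Ymat (n : ℕ) : Matrix (Fin n) (Fin n) ℂ :=
  Matrix.of fun i j => if (j : ℕ) = ((i : ℕ) + 1) % n then 1 else 0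

/-- `Z_{(k,l)} = Y^k X^{−l}`. -/
def Zmat (n d : ℕ) (k l : ℕ) : Matrix (Fin n) (Fin n) ℂ :=
  Ymat n ^ k * (Xmat n d)⁻¹ ^ l

/-- `Z^∨_{(k,l)} = (1/n) X^l Y^{−k}`. -/
def Zdual (n d : ℕ) (k l : ℕ) : Matrix (Fin n) (Fin n) ℂ :=
  (n : ℂ)⁻¹ • (Xmat n d ^ l * (Ymat n)⁻¹ ^ k)

/-- The third Jacobi theta function `θ(z) = ∑_{m ∈ ℤ} exp(πiτm² + 2πimz)`. -/
def theta3 (τ z : ℂ) : ℂ :=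
  ∑' m : ℤ, Complex.exp (Real.pi * Complex.I * τ * (m : ℂ) ^ 2 +
    2 * Real.pi * Complex.I * (m : ℂ) * z)

/-- The first Jacobi theta function
`θ̄(z) = 2 exp(πiτ/4) ∑_{m ≥ 0} (−1)^m exp(πiτ m(m+1)) sin((2m+1)πz)`. -/
def theta1 (τ z : ℂ) : ℂ :=
  2 * Complex.exp (Real.pi * Complex.I * τ / 4) *
    ∑' m : ℕ, (-1 : ℂ) ^ m * Complex.exp (Real.pi * Complex.I * τ * (m : ℂ) * ((m : ℂ) + 1)) *
      Complex.sin ((2 * (m : ℂ) + 1) * Real.pi * z)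

/-- The Kronecker elliptic function `σ(u, z) = θ̄′(0) θ̄(u+z) / (θ̄(u) θ̄(z))`. -/
def sigmaK (τ u z : ℂ) : ℂ :=
  deriv (theta1 τ) 0 * theta1 τ (u + z) / (theta1 τ u * theta1 τ z)

/-- `f_{(k,l)}(w) = exp(−2πi d k w/n) θ(w + (1+τ)/2 − c − (d/n)(kτ − l))`. -/
def fTwist (n d : ℕ) (τ c : ℂ) (k l : ℕ) (w : ℂ) : ℂ :=
  Complex.exp (-(2 * Real.pi * Complex.I) * d * k * w / n) *
    theta3 τ (w + (1 + τ) / 2 - c - ((d : ℂ) / n) * (k * τ - l))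

/-- The matrix-valued functional equations: `F` is holomorphic entrywise,
`F(w+1) = X F(w) X⁻¹` and `F(w+τ) = φ_c(w) Y F(w) Y⁻¹`. -/
def SolPred (n d : ℕ) (τ c : ℂ) (F : ℂ → Matrix (Fin n) (Fin n) ℂ) : Prop :=
  (∀ i j : Fin n, Differentiable ℂ fun w => F w i j) ∧
  (∀ w : ℂ, F (w + 1) = Xmat n d * F w * (Xmat n d)⁻¹) ∧
  (∀ w : ℂ, F (w + τ)
    = (-Complex.exp (-(2 * Real.pi * Complex.I) * (w + τ - c))) •
        (Ymat n * F w * (Ymat n)⁻¹))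


theorem theta3_eq (τ z : ℂ) : theta3 τ z = jacobiTheta₂ z τ := by
  unfold theta3 jacobiTheta₂ jacobiTheta₂_term
  congr 1; ext m; congr 1; ring

/-- Fourier coefficient integral. -/
def fcoef (h : ℂ → ℂ) (m : ℤ) : ℂ :=
  ∫ x in (0:ℝ)..1, Complex.exp (-(2 * Real.pi * Complex.I * m * x)) * h x

theorem integral_shift (G : ℂ → ℂ) (hG : Differentiable ℂ G) (hp : ∀ z, G (z + 1) = G z) (w : ℂ) :
    ∫ x in (0:ℝ)..1, G (x + w) = ∫ x in (0:ℝ)..1, G x := by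
  obtain ⟨P, hP⟩ := hG.isExactOn_univ
  have hP' : ∀ z, HasDerivAt P (G z) z := fun z => hP z (Set.mem_univ z)
  have key : ∀ w : ℂ, ∫ x in (0:ℝ)..1, G (x + w) = P (w + 1) - P w := by
    intro w
    have := intervalIntegral.integral_eq_sub_of_hasDerivAt (a := (0:ℝ)) (b := 1)
      (f := fun x : ℝ => P (x + w)) (f' := fun x : ℝ => G (x + w)) ?_ ?_
    · rw [this]; simp [add_comm]
    · intro x _
      have h1 : HasDerivAt (fun z : ℂ => P (z + w)) (G (x + w)) (x : ℂ) :=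
        (hP' (x + w)).comp_add_const (x : ℂ) w
      exact h1.comp_ofReal
    · apply Continuous.intervalIntegrable
      have := hG.continuous
      fun_prop
  have hconst : ∀ a b : ℂ, P (a + 1) - P a = P (b + 1) - P b := by
    have hd : ∀ z, HasDerivAt (fun z => P (z + 1) - P z) 0 z := by
      intro z
      have := ((hP' (z + 1)).comp_add_const z 1).sub (hP' z)
      rw [hp, sub_self] at this
      exact this
    exact fun a b => is_const_of_deriv_eq_zero (fun z => (hd z).differentiableAt)
      (fun z => (hd z).deriv) a b
  have h0 := key 0
  simp only [add_zero] at h0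
  rw [key, h0, hconst w 0]

theorem exp_int_aux (m : ℤ) (z : ℂ) : Complex.exp (-(2 * Real.pi * Complex.I * m * (z + 1))) =
    Complex.exp (-(2 * Real.pi * Complex.I * m * z)) := by
  have : -(2 * Real.pi * Complex.I * m * (z + 1)) =
    -(2 * Real.pi * Complex.I * m * z) + ((-m : ℤ) : ℂ) * (2 * Real.pi * Complex.I) := by
    push_cast; ring
  rw [this, Complex.exp_add, Complex.exp_int_mul_two_pi_mul_I, mul_one]

theorem fcoef_rec (τ : ℂ) (h : ℂ → ℂ) (hh : Differentiable ℂ h) (h1 : ∀ z, h (z + 1) = h z)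
    (hτ : ∀ z, h (z + τ) = Complex.exp (-(Real.pi * Complex.I * (τ + 2 * z))) * h z) (m : ℤ) :
    fcoef h m = Complex.exp (-(Real.pi * Complex.I * (τ + 2 * m * τ))) * fcoef h (m + 1) := by
  have := integral_shift (fun z => Complex.exp (-(2 * Real.pi * Complex.I * m * z)) * h z)
    (by fun_prop) (fun z => by simp only [exp_int_aux, h1]) τ
  unfold fcoef
  rw [← this, ← intervalIntegral.integral_const_mul]
  congr 1; ext x
  simp only [hτ]
  rw [← mul_assoc, ← mul_assoc, ← Complex.exp_add, ← Complex.exp_add]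
  congr 2
  push_cast; ring

theorem fcoef_zero_all (τ : ℂ) (h : ℂ → ℂ) (hh : Differentiable ℂ h) (h1 : ∀ z, h (z + 1) = h z)
    (hτ : ∀ z, h (z + τ) = Complex.exp (-(Real.pi * Complex.I * (τ + 2 * z))) * h z)
    (h0 : fcoef h 0 = 0) (m : ℤ) : fcoef h m = 0 := by
  induction m using Int.induction_on with
  | zero => exact h0
  | succ i ih =>
    rw [fcoef_rec τ h hh h1 hτ] at ih
    simpa [Complex.exp_ne_zero] using ih
  | pred i ih =>
    rw [fcoef_rec τ h hh h1 hτ]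
    simp [ih]

theorem eq_zero_of_fcoef (h : ℂ → ℂ) (hh : Differentiable ℂ h) (h1 : ∀ z, h (z + 1) = h z)
    (hm : ∀ m, fcoef h m = 0) (z : ℂ) : h z = 0 := by
  have : Fact ((0:ℝ) < 1) := ⟨one_pos⟩
  have hper : Function.Periodic (fun x : ℝ => h x) 1 := by
    intro x; simp [h1]
  have hc : Continuous (fun x : ℝ => h x) := hh.continuous.comp Complex.continuous_ofReal
  let f : C(AddCircle (1:ℝ), ℂ) := ⟨hper.lift, by
    exact continuous_coinduced_dom.mpr hc⟩
  have hf : ∀ x : ℝ, f (x : AddCircle (1:ℝ)) = h x := fun x => hper.lift_coe x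
  have hcoef : ∀ m, fourierCoeff f m = 0 := by
    intro m
    rw [fourierCoeff_eq_intervalIntegral f m 0]
    have := hm m
    unfold fcoef at this
    rw [zero_add]
    simp only [hf, fourier_coe_apply, smul_eq_mul]
    have h5 : ∀ x : ℝ, Complex.exp (2 * Real.pi * Complex.I * ((-m : ℤ) : ℂ) * x / ((1:ℝ) : ℂ)) =
        Complex.exp (-(2 * Real.pi * Complex.I * m * x)) := by
      intro x; congr 1; push_cast; ring
    simp only [h5, this, smul_zero]
  have hs : Summable (fourierCoeff f) := by
    have : fourierCoeff f = fun _ => 0 := funext hcoef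
    rw [this]; exact summable_zero
  have hreal : ∀ x : ℝ, h x = 0 := by
    intro x
    have := has_pointwise_sum_fourier_series_of_summable hs (x : AddCircle (1:ℝ))
    simp only [hcoef, zero_smul, hf] at this
    exact this.unique hasSum_zero
  have han : AnalyticOnNhd ℂ h Set.univ := fun z _ => hh.analyticAt z
  have := han.eq_of_frequently_eq (g := fun _ => 0) (fun z _ => analyticAt_const) (z₀ := 0) ?_
  · rw [this]
  · have ht : Filter.Tendsto (fun k : ℕ => (((1 / ((k:ℝ) + 1) : ℝ)) : ℂ)) Filter.atTop
        (nhdsWithin 0 {0}ᶜ) := by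
      apply tendsto_nhdsWithin_of_tendsto_nhds_of_eventually_within
      · have := (Complex.continuous_ofReal.tendsto 0).comp
          (tendsto_one_div_add_atTop_nhds_zero_nat (𝕜 := ℝ))
        rw [Complex.ofReal_zero] at this
        exact this
      · refine Filter.Eventually.of_forall fun k => ?_
        simp only [Set.mem_compl_iff, Set.mem_singleton_iff, Complex.ofReal_eq_zero]
        positivity
    exact ht.frequently (Filter.Frequently.of_forall fun k => hreal _)

theorem theta_diff (τ : ℂ) (hτ : 0 < τ.im) : Differentiable ℂ (theta3 τ) := by
  have : theta3 τ = fun z => jacobiTheta₂ z τ := funext (theta3_eq τ)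
  rw [this]
  exact fun z => differentiableAt_jacobiTheta₂_fst z hτ

theorem theta_one (τ z : ℂ) : theta3 τ (z + 1) = theta3 τ z := by
  simp only [theta3_eq, jacobiTheta₂_add_left]

theorem theta_tau (τ z : ℂ) : theta3 τ (z + τ) =
    Complex.exp (-(Real.pi * Complex.I * (τ + 2 * z))) * theta3 τ z := by
  simp only [theta3_eq, jacobiTheta₂_add_left']
  congr 2; ring

theorem theta_fcoef (τ : ℂ) (hτ : 0 < τ.im) : fcoef (theta3 τ) 0 = 1 := by
  have hs := (summable_jacobiTheta₂_term_iff 0 τ).2 hτ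
  have hnorm : ∀ (m : ℤ) (x : ℝ), ‖jacobiTheta₂_term m x τ‖ = ‖jacobiTheta₂_term m 0 τ‖ := by
    intro m x; simp [norm_jacobiTheta₂_term]
  let f : ℤ → C(ℝ, ℂ) := fun m => ⟨fun x => jacobiTheta₂_term m x τ, by
    unfold jacobiTheta₂_term; fun_prop⟩
  have hsum : Summable fun m => ‖(f m).restrict (⟨Set.uIcc (0:ℝ) 1, isCompact_uIcc⟩ : TopologicalSpace.Compacts ℝ)‖ := by
    refine Summable.of_nonneg_of_le (fun _ => norm_nonneg _) (fun m => ?_) hs.norm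
    refine (ContinuousMap.norm_le _ (norm_nonneg _)).2 fun x => ?_
    exact (hnorm m x).le
  have key := intervalIntegral.hasSum_intervalIntegral_of_summable_norm hsum
  have hintegral : ∀ m : ℤ, ∫ x in (0:ℝ)..1, f m x = if m = 0 then 1 else 0 := by
    intro m
    split_ifs with hm
    · subst hm; simp [f, jacobiTheta₂_term]
    · have hc : (2 * Real.pi * Complex.I * m : ℂ) ≠ 0 := by
        simp [hm, Real.pi_ne_zero]
      have : ∀ x : ℝ, f m x = Complex.exp (Real.pi * Complex.I * m ^ 2 * τ) *
          Complex.exp ((2 * Real.pi * Complex.I * m) * x) := by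
        intro x
        simp only [f, jacobiTheta₂_term, ContinuousMap.coe_mk]
        rw [← Complex.exp_add, add_comm]
      simp only [this]
      rw [intervalIntegral.integral_const_mul, integral_exp_mul_complex hc]
      have h2 : Complex.exp (2 * Real.pi * Complex.I * m * (1:ℝ)) = 1 := by
        rw [Complex.ofReal_one, mul_one, mul_comm, Complex.exp_int_mul_two_pi_mul_I]
      rw [h2]; simp
  simp only [hintegral] at key
  have h3 := key.unique (hasSum_ite_eq 0 1)
  unfold fcoef
  rw [← h3]
  congr 1; ext x
  rw [theta3_eq]; simp [jacobiTheta₂, f]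

theorem theta_unique (τ : ℂ) (ht : 0 < τ.im) (h : ℂ → ℂ) (hh : Differentiable ℂ h)
    (h1 : ∀ z, h (z + 1) = h z)
    (hτ : ∀ z, h (z + τ) = Complex.exp (-(Real.pi * Complex.I * (τ + 2 * z))) * h z) :
    ∃ lam : ℂ, ∀ z, h z = lam * theta3 τ z := by
  have hd := theta_diff τ ht
  refine ⟨fcoef h 0, fun z => ?_⟩
  set lam := fcoef h 0 with hlam
  have hgd : Differentiable ℂ (fun z => h z - lam * theta3 τ z) := by fun_prop
  have hg1 : ∀ z, (fun z => h z - lam * theta3 τ z) (z + 1) =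
      (fun z => h z - lam * theta3 τ z) z := by
    intro z; simp only [h1, theta_one]
  refine sub_eq_zero.1 (eq_zero_of_fcoef _ hgd hg1 (fcoef_zero_all τ _ hgd hg1 ?_ ?_) z)
  · intro z; simp only [hτ, theta_tau]; ring
  · have c1 := hh.continuous
    have c2 := hd.continuous
    have : fcoef (fun z => h z - lam * theta3 τ z) 0 = fcoef h 0 - lam * fcoef (theta3 τ) 0 := by
      unfold fcoef
      rw [← intervalIntegral.integral_const_mul, ← intervalIntegral.integral_sub]
      · congr 1; ext x; ring
      · apply Continuous.intervalIntegrable; fun_prop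
      · apply Continuous.intervalIntegrable; fun_prop
    rw [this, theta_fcoef τ ht, hlam]; ring

theorem theta_ne_zero (τ : ℂ) (ht : 0 < τ.im) : ∃ z, theta3 τ z ≠ 0 := by
  by_contra! hz
  have := theta_fcoef τ ht
  simp [fcoef, hz] at this

theorem eps_prim (n d : ℕ) (hn : n ≠ 0) (hcop : Nat.gcd d n = 1) : IsPrimitiveRoot (eps n d) n := by
  have := Complex.isPrimitiveRoot_exp_of_coprime d n hn hcop
  unfold eps
  rwa [mul_div_assoc]

theorem eps_ne (n d : ℕ) : eps n d ≠ 0 := Complex.exp_ne_zero _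

theorem X_unit (n d : ℕ) : IsUnit (Xmat n d) := by
  rw [Matrix.isUnit_iff_isUnit_det, Xmat, Matrix.det_diagonal, isUnit_iff_ne_zero]
  exact Finset.prod_ne_zero_iff.2 fun i _ => pow_ne_zero _ (eps_ne n d)

theorem Y_unit (n : ℕ) : IsUnit (Ymat n) := by
  have : Ymat n * (Ymat n)ᵀ = 1 := by
    ext i j
    have hn : 0 < n := i.pos
    rw [Matrix.mul_apply, Finset.sum_eq_single (⟨(i + 1) % n, Nat.mod_lt _ hn⟩ : Fin n)]
    · simp only [Ymat, Matrix.of_apply, Matrix.transpose_apply, if_true, one_mul, Matrix.one_apply]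
      congr 1
      have hi := i.2
      have hj := j.2
      rw [Fin.ext_iff, eq_iff_iff]
      constructor
      · intro h
        have h' : (i : ℕ) + 1 ≡ j + 1 [MOD n] := h
        have := Nat.ModEq.add_right_cancel' 1 h'
        rwa [Nat.ModEq, Nat.mod_eq_of_lt hi, Nat.mod_eq_of_lt hj] at this
      · intro h; rw [h]
    · intro b _ hb
      have : ¬ ((b : ℕ) = ((i : ℕ) + 1) % n) := fun h => hb (Fin.ext h)
      simp [Ymat, this]
    · simp
  exact IsUnit.of_mul_eq_one _ this

theorem YX (n d : ℕ) (hp : eps n d ^ n = 1) :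
    Ymat n * Xmat n d = eps n d • (Xmat n d * Ymat n) := by
  ext i j
  simp only [Xmat, Matrix.mul_diagonal, Matrix.smul_apply, Matrix.diagonal_mul, Ymat,
    Matrix.of_apply, smul_eq_mul]
  split_ifs with h
  · rw [h, ← pow_eq_pow_mod _ hp, pow_succ]; ring
  · simp

theorem conjX (n d : ℕ) (hp : eps n d ^ n = 1) (k l : ℕ) :
    Xmat n d * Zmat n d k l = ((eps n d)⁻¹ ^ k) • (Zmat n d k l * Xmat n d) := by
  have e := eps_ne n d
  have hX := (Matrix.isUnit_iff_isUnit_det _).1 (X_unit n d)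
  have h1 : Xmat n d * Ymat n = (eps n d)⁻¹ • (Ymat n * Xmat n d) := by
    rw [YX n d hp, smul_smul, inv_mul_cancel₀ e, one_smul]
  have h2 : ∀ k, Xmat n d * Ymat n ^ k = ((eps n d)⁻¹ ^ k) • (Ymat n ^ k * Xmat n d) := by
    intro k
    induction k with
    | zero => simp
    | succ k ih =>
      rw [pow_succ, ← mul_assoc, ih, smul_mul_assoc, mul_assoc, h1, mul_smul_comm, smul_smul,
        ← mul_assoc, ← pow_succ]
  have h3 : Commute (Xmat n d) ((Xmat n d)⁻¹ ^ l) := by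
    apply Commute.pow_right
    rw [Commute, SemiconjBy, Matrix.mul_nonsing_inv _ hX, Matrix.nonsing_inv_mul _ hX]
  rw [Zmat, ← mul_assoc, h2, smul_mul_assoc, mul_assoc, h3.eq, ← mul_assoc]

theorem conjY (n d : ℕ) (hp : eps n d ^ n = 1) (k l : ℕ) :
    Ymat n * Zmat n d k l = ((eps n d)⁻¹ ^ l) • (Zmat n d k l * Ymat n) := by
  have e := eps_ne n d
  have hX := (Matrix.isUnit_iff_isUnit_det _).1 (X_unit n d)
  have h1 : Ymat n * (Xmat n d)⁻¹ = (eps n d)⁻¹ • ((Xmat n d)⁻¹ * Ymat n) := by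
    have : (Xmat n d)⁻¹ * (Ymat n * Xmat n d) * (Xmat n d)⁻¹ =
      eps n d • (Ymat n * (Xmat n d)⁻¹) := by
      rw [YX n d hp, mul_smul_comm, smul_mul_assoc, ← mul_assoc, Matrix.nonsing_inv_mul _ hX,
        one_mul]
    rw [mul_assoc, mul_assoc, Matrix.mul_nonsing_inv _ hX, mul_one] at this
    rw [this, smul_smul, inv_mul_cancel₀ e, one_smul]
  have h2 : ∀ k, Ymat n * (Xmat n d)⁻¹ ^ k =
      ((eps n d)⁻¹ ^ k) • ((Xmat n d)⁻¹ ^ k * Ymat n) := by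
    intro k
    induction k with
    | zero => simp
    | succ k ih =>
      rw [pow_succ, ← mul_assoc, ih, smul_mul_assoc, mul_assoc, h1, mul_smul_comm, smul_smul,
        ← mul_assoc, ← pow_succ]
  have h3 : Commute (Ymat n) (Ymat n ^ k) := (Commute.refl _).pow_right k
  rw [Zmat, ← mul_assoc, h3.eq, mul_assoc, h2, mul_smul_comm, ← mul_assoc]

theorem conjX' (n d : ℕ) (hp : eps n d ^ n = 1) (k l : ℕ) :
    Xmat n d * Zmat n d k l * (Xmat n d)⁻¹ = ((eps n d)⁻¹ ^ k) • Zmat n d k l := by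
  have hX := (Matrix.isUnit_iff_isUnit_det _).1 (X_unit n d)
  rw [conjX n d hp, smul_mul_assoc, mul_assoc, Matrix.mul_nonsing_inv _ hX, mul_one]

theorem conjY' (n d : ℕ) (hp : eps n d ^ n = 1) (k l : ℕ) :
    Ymat n * Zmat n d k l * (Ymat n)⁻¹ = ((eps n d)⁻¹ ^ l) • Zmat n d k l := by
  have hY := (Matrix.isUnit_iff_isUnit_det _).1 (Y_unit n)
  rw [conjY n d hp, smul_mul_assoc, mul_assoc, Matrix.mul_nonsing_inv _ hY, mul_one]

theorem Z_unit (n d k l : ℕ) : IsUnit (Zmat n d k l) :=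
  ((Y_unit n).pow k).mul (((Matrix.isUnit_nonsing_inv_iff).2 (X_unit n d)).pow l)

/-- Trace orthogonality from a twisted commutation relation. -/
theorem trace_zero_aux {n : ℕ} (A P Q : Matrix (Fin n) (Fin n) ℂ) (hA : IsUnit A) (hQ : IsUnit Q)
    (a b : ℂ) (hb : b ≠ 0) (hP : A * P = a • (P * A)) (hQ' : A * Q = b • (Q * A)) (hab : a ≠ b) :
    (Q⁻¹ * P).trace = 0 := by
  have hq := (Matrix.isUnit_iff_isUnit_det _).1 hQ
  have ha := (Matrix.isUnit_iff_isUnit_det _).1 hA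
  have h1 : A * Q⁻¹ = b⁻¹ • (Q⁻¹ * A) := by
    have : Q⁻¹ * (A * Q) * Q⁻¹ = b • (A * Q⁻¹) := by
      rw [hQ', mul_smul_comm, smul_mul_assoc, ← mul_assoc, Matrix.nonsing_inv_mul _ hq, one_mul]
    rw [mul_assoc, mul_assoc, Matrix.mul_nonsing_inv _ hq, mul_one] at this
    rw [this, smul_smul, inv_mul_cancel₀ hb, one_smul]
  have h2 : A * (Q⁻¹ * P) * A⁻¹ = (b⁻¹ * a) • (Q⁻¹ * P) := by
    rw [← mul_assoc, h1, smul_mul_assoc, mul_assoc Q⁻¹, hP, mul_smul_comm, smul_smul,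
      smul_mul_assoc, mul_assoc, mul_assoc, Matrix.mul_nonsing_inv _ ha, mul_one]
  have h3 := Matrix.trace_conj hA (Q⁻¹ * P)
  rw [h2, Matrix.trace_smul, smul_eq_mul] at h3
  by_contra hne
  have h4 : b⁻¹ * a = 1 := by
    apply mul_right_cancel₀ hne; rw [h3, one_mul]
  apply hab
  field_simp at h4
  exact h4

theorem Z_linInd (n d : ℕ) (hn : n ≠ 0) (hcop : Nat.gcd d n = 1) :
    LinearIndependent ℂ (fun p : Fin n × Fin n => Zmat n d (p.1.1 + 1) (p.2.1 + 1)) := by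
  have hprim := eps_prim n d hn hcop
  have hp := hprim.pow_eq_one
  have e := eps_ne n d
  have hinj : ∀ i j : Fin n, (eps n d)⁻¹ ^ (i.1 + 1) = (eps n d)⁻¹ ^ (j.1 + 1) → i = j := by
    intro i j h
    rw [pow_succ, pow_succ] at h
    exact Fin.ext (hprim.inv.pow_inj i.2 j.2 (mul_right_cancel₀ (inv_ne_zero e) h))
  rw [Fintype.linearIndependent_iff]
  intro g hg q
  have h1 : ((Zmat n d (q.1.1 + 1) (q.2.1 + 1))⁻¹ *
    ∑ p : Fin n × Fin n, g p • Zmat n d (p.1.1 + 1) (p.2.1 + 1)).trace = 0 := by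
    rw [hg]; simp
  rw [Finset.mul_sum, Matrix.trace_sum, Finset.sum_eq_single q] at h1
  · rw [mul_smul_comm, Matrix.nonsing_inv_mul _
      ((Matrix.isUnit_iff_isUnit_det _).1 (Z_unit _ _ _ _)), Matrix.trace_smul,
      Matrix.trace_one] at h1
    simpa [hn] using h1
  · intro p _ hpq
    rw [mul_smul_comm, Matrix.trace_smul]
    have : p.1 ≠ q.1 ∨ p.2 ≠ q.2 := by
      by_contra! h
      exact hpq (Prod.ext h.1 h.2)
    rcases this with h | h
    · rw [trace_zero_aux (Xmat n d) _ _ (X_unit n d) (Z_unit _ _ _ _) _ _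
        (pow_ne_zero _ (inv_ne_zero e)) (conjX n d hp _ _) (conjX n d hp _ _)
        (fun h' => h (hinj _ _ h')), smul_zero]
    · rw [trace_zero_aux (Ymat n) _ _ (Y_unit n) (Z_unit _ _ _ _) _ _
        (pow_ne_zero _ (inv_ne_zero e)) (conjY n d hp _ _) (conjY n d hp _ _)
        (fun h' => h (hinj _ _ h')), smul_zero]
  · simp

theorem fTwist_diff (n d : ℕ) (τ : ℂ) (hτ : 0 < τ.im) (c : ℂ) (k l : ℕ) :
    Differentiable ℂ (fTwist n d τ c k l) := by
  have := theta_diff τ hτ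
  unfold fTwist
  fun_prop

theorem fTwist_ne_zero (n d : ℕ) (τ : ℂ) (hτ : 0 < τ.im) (c : ℂ) (k l : ℕ) :
    ∃ w, fTwist n d τ c k l w ≠ 0 := by
  obtain ⟨z, hz⟩ := theta_ne_zero τ hτ
  refine ⟨z - ((1 + τ) / 2 - c - ((d : ℂ) / n) * (k * τ - l)), ?_⟩
  unfold fTwist
  refine mul_ne_zero (Complex.exp_ne_zero _) ?_
  convert hz using 2
  ring

theorem eps_inv_pow (n d k : ℕ) :
    (eps n d)⁻¹ ^ k = Complex.exp (-(2 * Real.pi * Complex.I * d * k / n)) := by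
  unfold eps
  rw [← Complex.exp_neg, ← Complex.exp_nat_mul]
  congr 1; ring

theorem neg_exp_eq (z : ℂ) : -Complex.exp z = Complex.exp (z - Real.pi * Complex.I) := by
  rw [Complex.exp_sub, Complex.exp_pi_mul_I, div_neg, div_one]

theorem fTwist_one (n d : ℕ) (τ c : ℂ) (k l : ℕ) (w : ℂ) :
    fTwist n d τ c k l (w + 1) = (eps n d)⁻¹ ^ k * fTwist n d τ c k l w := by
  unfold fTwist
  have : w + 1 + (1 + τ) / 2 - c - ((d : ℂ) / n) * (k * τ - l) =
    (w + (1 + τ) / 2 - c - ((d : ℂ) / n) * (k * τ - l)) + 1 := by ring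
  rw [this, theta_one, eps_inv_pow, ← mul_assoc, ← Complex.exp_add]
  congr 2; ring

theorem fTwist_tau (n d : ℕ) (τ c : ℂ) (k l : ℕ) (w : ℂ) :
    fTwist n d τ c k l (w + τ) = (-Complex.exp (-(2 * Real.pi * Complex.I) * (w + τ - c))) *
      ((eps n d)⁻¹ ^ l * fTwist n d τ c k l w) := by
  unfold fTwist
  have : w + τ + (1 + τ) / 2 - c - ((d : ℂ) / n) * (k * τ - l) =
    (w + (1 + τ) / 2 - c - ((d : ℂ) / n) * (k * τ - l)) + τ := by ring
  rw [this, theta_tau, eps_inv_pow, neg_exp_eq]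
  simp only [← mul_assoc, ← Complex.exp_add]
  congr 2; ring

/-- One-dimensionality of each scalar problem. -/
theorem scalar_unique (n d : ℕ) (τ : ℂ) (hτ : 0 < τ.im) (c : ℂ) (k l : ℕ)
    (g : ℂ → ℂ) (hg : Differentiable ℂ g)
    (g1 : ∀ w, g (w + 1) = (eps n d)⁻¹ ^ k * g w)
    (g2 : ∀ w, g (w + τ) = (-Complex.exp (-(2 * Real.pi * Complex.I) * (w + τ - c))) *
      ((eps n d)⁻¹ ^ l * g w)) :
    ∃ lam : ℂ, ∀ w, g w = lam * fTwist n d τ c k l w := by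
  set s : ℂ := (1 + τ) / 2 - c - ((d : ℂ) / n) * (k * τ - l) with hs
  have e0 : Differentiable ℂ (fun z =>
      Complex.exp (2 * Real.pi * Complex.I * d * k * (z - s) / n) * g (z - s)) := by fun_prop
  have e1 : ∀ z, (fun z => Complex.exp (2 * Real.pi * Complex.I * d * k * (z - s) / n) *
      g (z - s)) (z + 1) =
      (fun z => Complex.exp (2 * Real.pi * Complex.I * d * k * (z - s) / n) * g (z - s)) z := by
    intro z
    have : z + 1 - s = z - s + 1 := by ring
    simp only [this, g1, eps_inv_pow]
    rw [← mul_assoc, ← Complex.exp_add]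
    congr 2; ring
  have e2 : ∀ z, (fun z => Complex.exp (2 * Real.pi * Complex.I * d * k * (z - s) / n) *
      g (z - s)) (z + τ) = Complex.exp (-(Real.pi * Complex.I * (τ + 2 * z))) *
      (fun z => Complex.exp (2 * Real.pi * Complex.I * d * k * (z - s) / n) * g (z - s)) z := by
    intro z
    have : z + τ - s = z - s + τ := by ring
    simp only [this, g2, eps_inv_pow, neg_exp_eq]
    simp only [← mul_assoc, ← Complex.exp_add]
    congr 2; rw [hs]; ring
  obtain ⟨lam, hl⟩ := theta_unique τ hτ _ e0 e1 e2
  refine ⟨lam, fun w => ?_⟩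
  have := hl (w + s)
  simp only [add_sub_cancel_right] at this
  have h2 : fTwist n d τ c k l w =
      Complex.exp (-(2 * Real.pi * Complex.I * d * k * w / n)) * theta3 τ (w + s) := by
    unfold fTwist
    congr 2
    · ring
    · rw [hs]; ring
  rw [h2, mul_left_comm, ← this, ← mul_assoc, ← Complex.exp_add, neg_add_cancel,
    Complex.exp_zero, one_mul]

/-- Every matrix solution of the functional equations decomposes uniquely in the
basis `f_{(k,l)}(w) Z_{(k,l)}`; in particular the solution space has dimension `n²`. -/
theorem stmt12 (n d : ℕ) (hd : 0 < d) (hdn : d < n) (hcop : Nat.gcd d n = 1)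
    (τ : ℂ) (hτ : 0 < τ.im) (c : ℂ) :
    (∀ p : Fin n × Fin n, SolPred n d τ c
        (fun w => fTwist n d τ c (p.1.1 + 1) (p.2.1 + 1) w • Zmat n d (p.1.1 + 1) (p.2.1 + 1))) ∧
    (∀ F : ℂ → Matrix (Fin n) (Fin n) ℂ, SolPred n d τ c F →
      ∃! lam : Fin n × Fin n → ℂ, ∀ w : ℂ,
        F w = ∑ p : Fin n × Fin n,
          lam p • (fTwist n d τ c (p.1.1 + 1) (p.2.1 + 1) w •
            Zmat n d (p.1.1 + 1) (p.2.1 + 1))) := by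
  have hn : n ≠ 0 := by omega
  have hp := (eps_prim n d hn hcop).pow_eq_one
  have hli := Z_linInd n d hn hcop
  refine ⟨fun p => ⟨?_, ?_, ?_⟩, fun F hF => ?_⟩
  · intro i j
    have := fTwist_diff n d τ hτ c (p.1.1 + 1) (p.2.1 + 1)
    simp only [Matrix.smul_apply, smul_eq_mul]
    fun_prop
  · intro w
    simp only [mul_smul_comm, smul_mul_assoc, conjX' n d hp, fTwist_one, smul_smul]
    rw [mul_comm]
  · intro w
    simp only [mul_smul_comm, smul_mul_assoc, conjY' n d hp, fTwist_tau, smul_smul]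
    congr 1; ring
  · obtain ⟨hF0, hF1, hF2⟩ := hF
    have : NeZero n := ⟨hn⟩
    let b := basisOfLinearIndependentOfCardEqFinrank hli (by simp [Module.finrank_matrix])
    have hb : ∀ p, b p = Zmat n d (p.1.1 + 1) (p.2.1 + 1) := by
      intro p; simp [b]
    have hsum : ∀ w, F w = ∑ p, b.repr (F w) p • Zmat n d (p.1.1 + 1) (p.2.1 + 1) := by
      intro w
      simp only [← hb]
      exact (b.sum_repr (F w)).symm
    have hrepr : ∀ (g : Fin n × Fin n → ℂ) (p : Fin n × Fin n),
        b.repr (∑ p, g p • Zmat n d (p.1.1 + 1) (p.2.1 + 1)) p = g p := by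
      intro g p
      simp only [← hb]
      rw [b.repr_sum_self]
    have hex : ∀ p : Fin n × Fin n, ∃ lam : ℂ, ∀ w, b.repr (F w) p =
        lam * fTwist n d τ c (p.1.1 + 1) (p.2.1 + 1) w := by
      intro p
      apply scalar_unique n d τ hτ c
      · have : (fun w => b.repr (F w) p) =
            fun w => ∑ i, ∑ j, F w i j * b.repr (Matrix.single i j 1) p := by
          ext w
          have h := congrArg (fun M => b.repr M p) (Matrix.matrix_eq_sum_single (F w))
          refine h.trans ?_
          simp only [map_sum, Finsupp.finsetSum_apply]
          refine Finset.sum_congr rfl fun i _ => Finset.sum_congr rfl fun j _ => ?_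
          have : Matrix.single i j (F w i j) = F w i j • Matrix.single i j (1:ℂ) := by simp
          rw [this, map_smul]; simp
        rw [this]
        fun_prop
      · intro w
        have h : F (w + 1) = ∑ p : Fin n × Fin n,
            ((eps n d)⁻¹ ^ (p.1.1 + 1) * b.repr (F w) p) • Zmat n d (p.1.1 + 1) (p.2.1 + 1) := by
          rw [hF1]
          conv_lhs => rw [hsum w]
          rw [Finset.mul_sum, Finset.sum_mul]
          refine Finset.sum_congr rfl fun q _ => ?_
          rw [mul_smul_comm, smul_mul_assoc, conjX' n d hp, smul_smul, mul_comm]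
        rw [h, hrepr]
      · intro w
        have h : F (w + τ) = ∑ p : Fin n × Fin n,
            ((-Complex.exp (-(2 * Real.pi * Complex.I) * (w + τ - c))) *
              ((eps n d)⁻¹ ^ (p.2.1 + 1) * b.repr (F w) p)) •
              Zmat n d (p.1.1 + 1) (p.2.1 + 1) := by
          rw [hF2]
          conv_lhs => rw [hsum w]
          rw [Finset.mul_sum, Finset.sum_mul, Finset.smul_sum]
          refine Finset.sum_congr rfl fun q _ => ?_
          rw [mul_smul_comm, smul_mul_assoc, conjY' n d hp, smul_smul, smul_smul]
          congr 1; ring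
        rw [h, hrepr]
    choose lam hlam using hex
    refine ⟨lam, fun w => ?_, fun mu hmu => ?_⟩
    · simp only [smul_smul, ← hlam]
      exact hsum w
    · ext p
      obtain ⟨w, hw⟩ := fTwist_ne_zero n d τ hτ c (p.1.1 + 1) (p.2.1 + 1)
      apply mul_right_cancel₀ hw
      rw [← hlam]
      have := hmu w
      simp only [smul_smul] at this
      rw [this, hrepr]
end
end

section
/- For w, x ∈ ℂ write c_{(k,l)}(w; x) = exp(2πi d k x / n) · σ(w + (d/n)(kτ + l), x). In Mat_n(ℂ)^{⊗3}, realized as n³×n³ complex matrices via iterated Kronecker products, define r^{12}(w; x) = ∑_{(k,l)} c_{(k,l)}(w; x) · Z^∨_{(k,l)} ⊗ Z_{(k,l)} ⊗ 𝟙, r^{13}(w; x) = ∑_{(k,l)} c_{(k,l)}(w; x) · Z^∨_{(k,l)} ⊗ 𝟙 ⊗ Z_{(k,l)}, and r^{23}(w; x) = ∑_{(k,l)} c_{(k,l)}(w; x) · 𝟙 ⊗ Z^∨_{(k,l)} ⊗ Z_{(k,l)}, the sums running over (k,l) ∈ {1,…,n}². Then for all u, v, x₁, x₂, x₃ ∈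 ℂ such that θ̄(x₂−x₁) ≠ 0, θ̄(x₃−x₂) ≠ 0, θ̄(x₃−x₁) ≠ 0, and θ̄(w + (d/n)(kτ + l)) ≠ 0 for every w ∈ {u, v, −v, u+v} and every (k,l) ∈ {1,…,n}², the associative Yang–Baxter equation holds: r^{12}(u; x₂−x₁) · r^{23}(u+v; x₃−x₂) = r^{13}(u+v; x₃−x₁) · r^{12}(−v; x₂−x₁) + r^{23}(v; x₃−x₂) · r^{13}(u; x₃−x₁), where · is matrix multiplication of n³×n³ matrices. -/
open Complex Matrix
open scoped Kronecker

noncomputable section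

/-- The scalar coefficient `c_{(k,l)}(w; x) = exp(2πi d k x/n) σ(w + (d/n)(kτ + l), x)`. -/
def ckl (n d : ℕ) (τ : ℂ) (k l : ℕ) (w x : ℂ) : ℂ :=
  Complex.exp (2 * Real.pi * Complex.I * d * k * x / n) *
    sigmaK τ (w + ((d : ℂ) / n) * (k * τ + l)) x

/-- `r^{12}(w;x) = ∑ c_{(k,l)}(w;x) Z^∨_{(k,l)} ⊗ Z_{(k,l)} ⊗ 𝟙`. -/
def r12 (n d : ℕ) (τ : ℂ) (w x : ℂ) :
    Matrix ((Fin n × Fin n) × Fin n) ((Fin n × Fin n) × Fin n) ℂ :=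
  ∑ p : Fin n × Fin n, ckl n d τ (p.1.1 + 1) (p.2.1 + 1) w x •
    ((Zdual n d (p.1.1 + 1) (p.2.1 + 1) ⊗ₖ Zmat n d (p.1.1 + 1) (p.2.1 + 1)) ⊗ₖ
      (1 : Matrix (Fin n) (Fin n) ℂ))

/-- `r^{13}(w;x) = ∑ c_{(k,l)}(w;x) Z^∨_{(k,l)} ⊗ 𝟙 ⊗ Z_{(k,l)}`. -/
def r13 (n d : ℕ) (τ : ℂ) (w x : ℂ) :
    Matrix ((Fin n × Fin n) × Fin n) ((Fin n × Fin n) × Fin n) ℂ :=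
  ∑ p : Fin n × Fin n, ckl n d τ (p.1.1 + 1) (p.2.1 + 1) w x •
    ((Zdual n d (p.1.1 + 1) (p.2.1 + 1) ⊗ₖ (1 : Matrix (Fin n) (Fin n) ℂ)) ⊗ₖ
      Zmat n d (p.1.1 + 1) (p.2.1 + 1))

/-- `r^{23}(w;x) = ∑ c_{(k,l)}(w;x) 𝟙 ⊗ Z^∨_{(k,l)} ⊗ Z_{(k,l)}`. -/
def r23 (n d : ℕ) (τ : ℂ) (w x : ℂ) :
    Matrix ((Fin n × Fin n) × Fin n) ((Fin n × Fin n) × Fin n) ℂ :=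
  ∑ p : Fin n × Fin n, ckl n d τ (p.1.1 + 1) (p.2.1 + 1) w x •
    (((1 : Matrix (Fin n) (Fin n) ℂ) ⊗ₖ Zdual n d (p.1.1 + 1) (p.2.1 + 1)) ⊗ₖ
      Zmat n d (p.1.1 + 1) (p.2.1 + 1))

/-- Bilateral term of the theta series. -/
def Tterm (τ z : ℂ) (m : ℤ) : ℂ :=
  Complex.exp (Real.pi * Complex.I * m + Real.pi * Complex.I * τ * ((m : ℂ) + 1 / 2) ^ 2 +
    2 * Real.pi * Complex.I * ((m : ℂ) + 1 / 2) * z)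

def Tfun (τ z : ℂ) : ℂ :=
  Complex.exp (Real.pi * Complex.I * τ / 4 + Real.pi * Complex.I * z) *
    jacobiTheta₂ (z + 1 / 2 + τ / 2) τ

def fterm (τ z : ℂ) (m : ℤ) : ℂ :=
  Complex.exp (4 * Real.pi * Complex.I * m * z + 2 * Real.pi * Complex.I * τ * (m : ℂ) ^ 2)

def gterm (τ z : ℂ) (m : ℤ) : ℂ :=
  Complex.exp (2 * Real.pi * Complex.I * (2 * m + 1) * z +
    Real.pi * Complex.I * τ * (2 * (m : ℂ) + 1) ^ 2 / 2)

lemma Tterm_hasSum {τ : ℂ} (hτ : 0 < τ.im) (z : ℂ) : HasSum (Tterm τ z) (Tfun τ z) := by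
  refine ((hasSum_jacobiTheta₂_term (z + 1 / 2 + τ / 2) hτ).mul_left _).congr_fun fun m => ?_
  rw [Tterm, jacobiTheta₂_term, ← Complex.exp_add]
  congr 1
  ring

lemma fterm_summable {τ : ℂ} (hτ : 0 < τ.im) (z : ℂ) : Summable (fterm τ z) := by
  have h2 : 0 < (2 * τ).im := by simpa using hτ
  refine ((hasSum_jacobiTheta₂_term (2 * z) h2).congr_fun fun m => ?_).summable
  rw [fterm, jacobiTheta₂_term]
  congr 1
  ring

lemma gterm_summable {τ : ℂ} (hτ : 0 < τ.im) (z : ℂ) : Summable (gterm τ z) := by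
  have h2 : 0 < (2 * τ).im := by simpa using hτ
  refine (((hasSum_jacobiTheta₂_term (2 * z + τ) h2).mul_left (Complex.exp
    (Real.pi * Complex.I * τ / 2 + 2 * Real.pi * Complex.I * z))).congr_fun fun m => ?_).summable
  rw [gterm, jacobiTheta₂_term, ← Complex.exp_add]
  congr 1
  ring

lemma theta1_eq {τ : ℂ} (hτ : 0 < τ.im) (z : ℂ) : theta1 τ z = -Complex.I * Tfun τ z := by
  have h := ((Tterm_hasSum hτ z).nat_add_neg_add_one.mul_left (-Complex.I)).tsum_eq
  rw [← h, theta1, ← tsum_mul_left]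
  congr 1
  funext m
  have e1 : Complex.exp (Real.pi * Complex.I * m) = (-1) ^ m := by
    rw [mul_comm, Complex.exp_nat_mul, Complex.exp_pi_mul_I]
  have e2 : Complex.exp (Real.pi * Complex.I * (-(m + 1))) = -(-1) ^ m := by
    rw [show (Real.pi * Complex.I * (-((m : ℂ) + 1))) = Real.pi * Complex.I * m -
      (((m : ℤ) + 1 : ℤ) : ℂ) * (2 * Real.pi * Complex.I) + Real.pi * Complex.I by push_cast; ring,
      Complex.exp_add, Complex.exp_sub, Complex.exp_int_mul_two_pi_mul_I, Complex.exp_pi_mul_I, e1]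
    ring
  unfold Tterm Complex.sin
  push_cast
  simp only [Complex.exp_add, e1, e2]
  have q : Complex.exp (Real.pi * Complex.I * τ * ((m : ℂ) + 1 / 2) ^ 2) =
      Complex.exp (Real.pi * Complex.I * τ / 4) *
        Complex.exp (Real.pi * Complex.I * τ * m * (m + 1)) := by
    rw [← Complex.exp_add]; congr 1; ring
  have q2 : Complex.exp (Real.pi * Complex.I * τ * (-((m : ℂ) + 1) + 1 / 2) ^ 2) =
      Complex.exp (Real.pi * Complex.I * τ / 4) *
        Complex.exp (Real.pi * Complex.I * τ * m * (m + 1)) := by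
    rw [← Complex.exp_add]; congr 1; ring
  rw [q, q2,
    show 2 * Real.pi * Complex.I * ((m : ℂ) + 1 / 2) * z
      = (2 * (m : ℂ) + 1) * Real.pi * z * Complex.I by ring,
    show 2 * Real.pi * Complex.I * (-((m : ℂ) + 1) + 1 / 2) * z
      = -((2 * (m : ℂ) + 1) * Real.pi * z) * Complex.I by ring]
  ring

lemma parity_bij : Function.Bijective (fun x : (ℤ × ℤ) ⊕ (ℤ × ℤ) =>
    Sum.elim (fun p : ℤ × ℤ => (p.1 + p.2, p.1 - p.2))
      (fun p : ℤ × ℤ => (p.1 + p.2, p.1 - p.2 - 1)) x) := by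
  constructor
  · rintro (⟨s, t⟩ | ⟨s, t⟩) (⟨s', t'⟩ | ⟨s', t'⟩) h <;>
      simp only [Sum.elim_inl, Sum.elim_inr, Prod.mk.injEq] at h
    · congr 2 <;> omega
    · omega
    · omega
    · congr 2 <;> omega
  · rintro ⟨m, n⟩
    rcases Int.even_or_odd' (m + n) with ⟨k, hk | hk⟩
    · refine ⟨Sum.inl (k, m - k), ?_⟩
      simp only [Sum.elim_inl, Prod.mk.injEq]; omega
    · refine ⟨Sum.inr (k + 1, m - k - 1), ?_⟩
      simp only [Sum.elim_inr, Prod.mk.injEq]; omega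

lemma Tfun_mul {τ : ℂ} (hτ : 0 < τ.im) (a b : ℂ) :
    Tfun τ (a + b) * Tfun τ (a - b) =
      (∑' s, gterm τ a s) * (∑' s, fterm τ b s) - (∑' s, fterm τ a s) * (∑' s, gterm τ b s) := by
  have hT := fun z => (Tterm_hasSum hτ z)
  have hf := fun z => (fterm_summable hτ z)
  have hg := fun z => (gterm_summable hτ z)
  have h1 := (hT (a + b)).mul (hT (a - b))
    (summable_mul_of_summable_norm (hT _).summable.norm (hT _).summable.norm)
  have h2 := (hg a).hasSum.mul (hf b).hasSum (summable_mul_of_summable_norm (hg a).norm (hf b).norm)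
  have h3 := ((hf a).hasSum.mul (hg b).hasSum
    (summable_mul_of_summable_norm (hf a).norm (hg b).norm)).neg
  have h4 := (Equiv.hasSum_iff (Equiv.ofBijective _ parity_bij)).mpr h1
  rw [sub_eq_add_neg]
  refine h4.unique (HasSum.sum (h2.congr_fun ?_) (h3.congr_fun ?_))
  · rintro ⟨s, t⟩
    simp only [Function.comp, Equiv.ofBijective_apply, Sum.elim_inl, Tterm, fterm, gterm]
    rw [← Complex.exp_add, ← Complex.exp_add, Complex.exp_eq_exp_iff_exists_int]
    refine ⟨s, ?_⟩
    push_cast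
    ring
  · rintro ⟨s, t⟩
    simp only [Function.comp, Equiv.ofBijective_apply, Sum.elim_inr, Tterm, fterm, gterm]
    rw [← Complex.exp_add, ← Complex.exp_add, ← neg_one_mul, ← Complex.exp_pi_mul_I,
      ← Complex.exp_add, Complex.exp_eq_exp_iff_exists_int]
    refine ⟨s - 1, ?_⟩
    push_cast
    ring

lemma theta1_mul {τ : ℂ} (hτ : 0 < τ.im) (a b : ℂ) :
    theta1 τ (a + b) * theta1 τ (a - b) =
      (∑' s, fterm τ a s) * (∑' s, gterm τ b s) - (∑' s, gterm τ a s) * (∑' s, fterm τ b s) := by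
  rw [theta1_eq hτ, theta1_eq hτ]
  linear_combination (-1 : ℂ) * Tfun_mul hτ a b + Tfun τ (a + b) * Tfun τ (a - b) * Complex.I_sq

lemma theta1_neg (τ z : ℂ) : theta1 τ (-z) = - theta1 τ z := by
  simp [theta1, tsum_neg]

lemma weierstrass {τ : ℂ} (hτ : 0 < τ.im) (a b c d : ℂ) :
    theta1 τ (a + b) * theta1 τ (a - b) * (theta1 τ (c + d) * theta1 τ (c - d))
    - theta1 τ (a + c) * theta1 τ (a - c) * (theta1 τ (b + d) * theta1 τ (b - d))
    + theta1 τ (a + d) * theta1 τ (a - d) * (theta1 τ (b + c) * theta1 τ (b - c)) = 0 := by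
  simp only [theta1_mul hτ]
  ring

lemma fay {τ : ℂ} (hτ : 0 < τ.im) (A B x y : ℂ) (hA : theta1 τ A ≠ 0) (hB : theta1 τ B ≠ 0)
    (hAB : theta1 τ (A - B) ≠ 0) (hx : theta1 τ x ≠ 0) (hy : theta1 τ y ≠ 0)
    (hxy : theta1 τ (x + y) ≠ 0) :
    sigmaK τ A x * sigmaK τ B y = sigmaK τ B (x + y) * sigmaK τ (A - B) x +
      sigmaK τ (B - A) y * sigmaK τ A (x + y) := by
  have w := weierstrass hτ ((A + x + B + y) / 2) ((A + x - B - y) / 2) ((x + y + A - B) / 2)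
    ((x + y - A + B) / 2)
  ring_nf at w
  have e : theta1 τ (B - A) = - theta1 τ (A - B) := by rw [← theta1_neg]; ring_nf
  have e2 : theta1 τ (B - A + y) = - theta1 τ (A - B - y) := by rw [← theta1_neg]; ring_nf
  have w' : theta1 τ (A + x) * theta1 τ (B + y) * (theta1 τ (x + y) * theta1 τ (A - B))
    - theta1 τ (A + (x + y)) * theta1 τ B * (theta1 τ x * theta1 τ (A - B - y))
    - theta1 τ (B + (x + y)) * theta1 τ A * (theta1 τ (A - B + x) * theta1 τ y) = 0 := by
    have e3 := theta1_neg τ y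
    ring_nf
    rw [← w, e3]
    ring_nf
  unfold sigmaK
  rw [e, e2]
  field_simp
  linear_combination (deriv (theta1 τ) 0) ^ 2 * w'

lemma theta1_add_one {τ : ℂ} (hτ : 0 < τ.im) (z : ℂ) : theta1 τ (z + 1) = - theta1 τ z := by
  rw [theta1_eq hτ, theta1_eq hτ, Tfun, Tfun,
    show z + 1 + 1 / 2 + τ / 2 = (z + 1 / 2 + τ / 2) + 1 by ring, jacobiTheta₂_add_left,
    show Real.pi * Complex.I * τ / 4 + Real.pi * Complex.I * (z + 1) =
      (Real.pi * Complex.I * τ / 4 + Real.pi * Complex.I * z) + Real.pi * Complex.I by ring,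
    Complex.exp_add, Complex.exp_pi_mul_I]
  ring

lemma theta1_add_tau {τ : ℂ} (hτ : 0 < τ.im) (z : ℂ) : theta1 τ (z + τ) =
    - Complex.exp (-Real.pi * Complex.I * τ - 2 * Real.pi * Complex.I * z) * theta1 τ z := by
  rw [theta1_eq hτ, theta1_eq hτ, Tfun, Tfun,
    show z + τ + 1 / 2 + τ / 2 = (z + 1 / 2 + τ / 2) + τ by ring, jacobiTheta₂_add_left']
  have : Complex.exp (Real.pi * Complex.I * τ / 4 + Real.pi * Complex.I * (z + τ)) *
      Complex.exp (-Real.pi * Complex.I * (τ + 2 * (z + 1 / 2 + τ / 2))) =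
      - Complex.exp (-Real.pi * Complex.I * τ - 2 * Real.pi * Complex.I * z) *
      Complex.exp (Real.pi * Complex.I * τ / 4 + Real.pi * Complex.I * z) := by
    rw [← Complex.exp_add, neg_mul (Complex.exp _), ← Complex.exp_add, ← neg_one_mul (Complex.exp _),
      show (-1 : ℂ) * Complex.exp (-Real.pi * Complex.I * τ - 2 * Real.pi * Complex.I * z +
        (Real.pi * Complex.I * τ / 4 + Real.pi * Complex.I * z)) = Complex.exp (Real.pi * Complex.I) *
        Complex.exp (-Real.pi * Complex.I * τ - 2 * Real.pi * Complex.I * z +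
        (Real.pi * Complex.I * τ / 4 + Real.pi * Complex.I * z)) by rw [Complex.exp_pi_mul_I],
      ← Complex.exp_add, Complex.exp_eq_exp_iff_exists_int]
    refine ⟨-1, ?_⟩
    push_cast
    ring
  linear_combination (-Complex.I * jacobiTheta₂ (z + 1 / 2 + τ / 2) τ) * this

lemma sigmaK_add_one {τ : ℂ} (hτ : 0 < τ.im) (u z : ℂ) : sigmaK τ (u + 1) z = sigmaK τ u z := by
  unfold sigmaK
  rw [show u + 1 + z = u + z + 1 by ring, theta1_add_one hτ, theta1_add_one hτ]
  rw [neg_mul, mul_neg, neg_div_neg_eq]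

lemma sigmaK_add_tau {τ : ℂ} (hτ : 0 < τ.im) (u z : ℂ) :
    sigmaK τ (u + τ) z = Complex.exp (-(2 * Real.pi * Complex.I * z)) * sigmaK τ u z := by
  unfold sigmaK
  rw [show u + τ + z = u + z + τ by ring, theta1_add_tau hτ, theta1_add_tau hτ,
    show -Real.pi * Complex.I * τ - 2 * Real.pi * Complex.I * (u + z) =
      (-Real.pi * Complex.I * τ - 2 * Real.pi * Complex.I * u) + -(2 * Real.pi * Complex.I * z)
      by ring, Complex.exp_add]
  set E := Complex.exp (-Real.pi * Complex.I * τ - 2 * Real.pi * Complex.I * u) with hE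
  have : E ≠ 0 := Complex.exp_ne_zero _
  rw [show ∀ a b c p q : ℂ, a * (-(E * b) * c) / (-E * p * q) = (-E * (b * (a * c))) / (-E * (p * q))
    by intros; ring_nf, mul_div_mul_left _ _ (neg_ne_zero.mpr this), mul_div_assoc]

lemma sigmaK_add_int {τ : ℂ} (hτ : 0 < τ.im) (u z : ℂ) (m : ℤ) :
    sigmaK τ (u + m) z = sigmaK τ u z := by
  have h : Function.Periodic (fun u => sigmaK τ u z) 1 := fun u => sigmaK_add_one hτ u z
  simpa using h.int_mul m u

lemma sigmaK_add_int_tau {τ : ℂ} (hτ : 0 < τ.im) (u z : ℂ) (m : ℤ) :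
    Complex.exp (2 * Real.pi * Complex.I * m * z) * sigmaK τ (u + m * τ) z = sigmaK τ u z := by
  have h : Function.Periodic (fun k : ℂ => Complex.exp (2 * Real.pi * Complex.I * k * z) *
      sigmaK τ (u + k * τ) z) 1 := by
    intro k
    simp only
    rw [show u + (k + 1) * τ = u + k * τ + τ by ring, sigmaK_add_tau hτ, ← mul_assoc,
      ← Complex.exp_add]
    congr 2
    ring
  simpa using h.int_mul m 0

lemma theta1_zero_add {τ : ℂ} (hτ : 0 < τ.im) (z : ℂ) (m k : ℤ) :
    theta1 τ (z + m * τ + k) = 0 ↔ theta1 τ z = 0 := by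
  have h1 : Function.Periodic (fun z => theta1 τ z = 0) 1 := fun z => by
    simp [theta1_add_one hτ]
  have h2 : Function.Periodic (fun z => theta1 τ z = 0) τ := fun z => by
    simp [theta1_add_tau hτ]
  have a := h1.int_mul k (z + m * τ)
  have b := h2.int_mul m z
  simp only [mul_one] at a
  exact iff_of_eq (a.trans b)

/-- Coefficients with integer indices. -/
def cZ (n d : ℕ) (τ : ℂ) (k l : ℤ) (w x : ℂ) : ℂ :=
  Complex.exp (2 * Real.pi * Complex.I * d * k * x / n) *
    sigmaK τ (w + ((d : ℂ) / n) * (k * τ + l)) x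

lemma cZ_shift (n d : ℕ) (hn : n ≠ 0) {τ : ℂ} (hτ : 0 < τ.im) (k l a b : ℤ) (w x : ℂ) :
    cZ n d τ (k + n * a) (l + n * b) w x = cZ n d τ k l w x := by
  have hn' : (n : ℂ) ≠ 0 := by exact_mod_cast hn
  unfold cZ
  rw [show w + ((d : ℂ) / n) * (((k + n * a : ℤ) : ℂ) * τ + ((l + n * b : ℤ) : ℂ)) =
      w + ((d : ℂ) / n) * (k * τ + l) + ((d * a : ℤ) : ℂ) * τ + ((d * b : ℤ) : ℂ) by
        push_cast; field_simp; ring,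
    sigmaK_add_int hτ,
    ← sigmaK_add_int_tau hτ (w + ((d : ℂ) / n) * (k * τ + l)) x (d * a), ← mul_assoc,
    ← Complex.exp_add]
  congr 2
  push_cast
  field_simp

lemma cZ_congr (n d : ℕ) (hn : n ≠ 0) {τ : ℂ} (hτ : 0 < τ.im) (k l k' l' : ℤ) (w x : ℂ)
    (hk : (k : ZMod n) = k') (hl : (l : ZMod n) = l') :
    cZ n d τ k l w x = cZ n d τ k' l' w x := by
  rw [ZMod.intCast_eq_intCast_iff_dvd_sub] at hk hl
  obtain ⟨a, ha⟩ := hk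
  obtain ⟨b, hb⟩ := hl
  rw [← cZ_shift n d hn hτ k l a b]
  congr 1 <;> omega

lemma pol_int (n d : ℕ) (hn : n ≠ 0) {τ : ℂ} (hτ : 0 < τ.im) (w : ℂ)
    (h : ∀ k l : ℕ, 1 ≤ k → k ≤ n → 1 ≤ l → l ≤ n →
      theta1 τ (w + ((d : ℂ) / n) * (k * τ + l)) ≠ 0) (k l : ℤ) :
    theta1 τ (w + ((d : ℂ) / n) * (k * τ + l)) ≠ 0 := by
  have hn' : (n : ℂ) ≠ 0 := by exact_mod_cast hn
  have key : ∀ k : ℤ, ∃ (m : ℕ) (a : ℤ), 1 ≤ m ∧ m ≤ n ∧ k = m + n * a := by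
    intro k
    have h1 := Int.emod_nonneg (k - 1) (b := (n : ℤ)) (by exact_mod_cast hn)
    have h2 := Int.emod_lt_of_pos (k - 1) (b := (n : ℤ)) (by omega)
    have h3 := Int.emod_add_mul_ediv (k - 1) n
    refine ⟨((k - 1) % n).toNat + 1, (k - 1) / n, by omega, by omega, ?_⟩
    push_cast
    rw [Int.toNat_of_nonneg h1]
    omega
  obtain ⟨m, a, h1, h2, rfl⟩ := key k
  obtain ⟨m', b, h3, h4, rfl⟩ := key l
  have := h m m' h1 h2 h3 h4
  rw [Ne, ← theta1_zero_add hτ _ (d * a) (d * b)] at this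
  convert this using 2
  push_cast
  field_simp
  ring

lemma fay_cZ (n d : ℕ) {τ : ℂ} (hτ : 0 < τ.im) (u v x y : ℂ)
    (hx : theta1 τ x ≠ 0) (hy : theta1 τ y ≠ 0) (hxy : theta1 τ (x + y) ≠ 0)
    (hu : ∀ k l : ℤ, theta1 τ (u + ((d : ℂ) / n) * (k * τ + l)) ≠ 0)
    (huv : ∀ k l : ℤ, theta1 τ (u + v + ((d : ℂ) / n) * (k * τ + l)) ≠ 0)
    (hv : ∀ k l : ℤ, theta1 τ (-v + ((d : ℂ) / n) * (k * τ + l)) ≠ 0) (k l k' l' : ℤ) :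
    cZ n d τ k l u x * cZ n d τ k' l' (u + v) y =
      cZ n d τ k' l' (u + v) (x + y) * cZ n d τ (k - k') (l - l') (-v) x +
      cZ n d τ (k' - k) (l' - l) v y * cZ n d τ k l u (x + y) := by
  have e1 : (u + ((d : ℂ) / n) * (k * τ + l)) - (u + v + ((d : ℂ) / n) * (k' * τ + l')) =
      -v + ((d : ℂ) / n) * (((k - k' : ℤ) : ℂ) * τ + ((l - l' : ℤ) : ℂ)) := by push_cast; ring
  have e2 : (u + v + ((d : ℂ) / n) * (k' * τ + l')) - (u + ((d : ℂ) / n) * (k * τ + l)) =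
      v + ((d : ℂ) / n) * (((k' - k : ℤ) : ℂ) * τ + ((l' - l : ℤ) : ℂ)) := by push_cast; ring
  have F := fay hτ (u + ((d : ℂ) / n) * (k * τ + l)) (u + v + ((d : ℂ) / n) * (k' * τ + l')) x y
    (hu k l) (huv k' l') (by rw [e1]; exact hv _ _) hx hy hxy
  rw [e1, e2] at F
  unfold cZ
  rw [mul_mul_mul_comm, F, mul_mul_mul_comm, mul_mul_mul_comm (Complex.exp _) _ (Complex.exp _),
    ← Complex.exp_add, ← Complex.exp_add, ← Complex.exp_add, mul_add]
  congr 3 <;> · push_cast; ring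

/-! Matrices -/

section mats
variable {n : ℕ} [NeZero n]

/-- Coercion of `Fin n` to `ZMod n`. -/
def fz (i : Fin n) : ZMod n := ((i : ℕ) : ZMod n)

lemma fz_bij : Function.Bijective (fz (n := n)) := by
  have hinj : Function.Injective (fz (n := n)) := by
    intro i j h
    have := congrArg ZMod.val h
    rw [fz, fz, ZMod.val_natCast_of_lt i.2, ZMod.val_natCast_of_lt j.2] at this
    exact Fin.ext this
  exact (Fintype.bijective_iff_injective_and_card _).mpr ⟨hinj, by simp [ZMod.card]⟩

/-- Generalized shift matrices. -/
def Mm (a : ZMod n) (φ : ZMod n → ℂ) : Matrix (Fin n) (Fin n) ℂ :=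
  Matrix.of fun i j => if fz j = fz i + a then φ (fz j) else 0

lemma Mm_mul (a b : ZMod n) (φ ψ : ZMod n → ℂ) :
    Mm a φ * Mm b ψ = Mm (a + b) (fun j => φ (j - b) * ψ j) := by
  ext i j
  simp only [Matrix.mul_apply, Mm, Matrix.of_apply]
  rw [fz_bij.sum_comp (fun m : ZMod n => (if m = fz i + a then φ m else 0) *
    (if fz j = m + b then ψ (fz j) else 0))]
  simp only [ite_mul, zero_mul, Finset.sum_ite_eq', Finset.sum_ite_eq, Finset.mem_univ, if_true]
  by_cases h : fz j = fz i + (a + b)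
  · rw [if_pos h, if_pos (by rw [h]; ring), h]
    congr 2; ring
  · rw [if_neg h, if_neg (by rw [add_assoc]; exact h), mul_zero]

lemma Mm_one : (1 : Matrix (Fin n) (Fin n) ℂ) = Mm 0 (fun _ => 1) := by
  ext i j
  simp only [Mm, Matrix.of_apply, Matrix.one_apply, add_zero, fz_bij.injective.eq_iff]
  simp only [eq_comm]

lemma Mm_smul (c : ℂ) (a : ZMod n) (φ : ZMod n → ℂ) : c • Mm a φ = Mm a (fun j => c * φ j) := by
  ext i j
  simp [Mm]

lemma Mm_pow0 (φ : ZMod n → ℂ) (k : ℕ) : Mm 0 φ ^ k = Mm 0 (fun j => φ j ^ k) := by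
  induction k with
  | zero => simp [Mm_one]
  | succ k ih => rw [pow_succ, ih, Mm_mul]; simp [pow_succ]

lemma Mm_pow1 (a : ZMod n) (k : ℕ) : Mm a (fun _ => 1) ^ k = Mm ((k : ZMod n) * a) (fun _ => 1) := by
  induction k with
  | zero => simp [Mm_one]
  | succ k ih => 
    rw [pow_succ, ih, Mm_mul]
    congr 1
    · push_cast; ring
    · simp

/-- The character. -/
def om (n d : ℕ) [NeZero n] (x : ZMod n) : ℂ := ZMod.stdAddChar ((d : ZMod n) * x)

lemma om_add (d : ℕ) (x y : ZMod n) : om n d (x + y) = om n d x * om n d y := by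
  rw [om, mul_add, AddChar.map_add_eq_mul]; rfl

lemma om_zero (d : ℕ) : om n d 0 = 1 := by simp [om]

lemma om_pow (d : ℕ) (x : ZMod n) (k : ℕ) : om n d x ^ k = om n d (k * x) := by
  induction k with
  | zero => simp [om_zero]
  | succ k ih => rw [pow_succ, ih, ← om_add]; congr 1; push_cast; ring

lemma om_one (d : ℕ) : om n d 1 = eps n d := by
  have := ZMod.stdAddChar_coe (N := n) (d : ℤ)
  rw [om, eps, mul_one]
  exact_mod_cast this

lemma Xmat_eq (d : ℕ) : Xmat n d = Mm 0 (om n d) := by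
  ext i j
  simp only [Xmat, Mm, Matrix.of_apply, Matrix.diagonal_apply, add_zero, fz_bij.injective.eq_iff]
  by_cases h : i = j
  · subst h
    simp only [if_true]
    rw [← om_one, om_pow, mul_one]; rfl
  · rw [if_neg h, if_neg (Ne.symm h)]

lemma Ymat_eq : Ymat n = Mm 1 (fun _ => 1) := by
  ext i j
  simp only [Ymat, Mm, Matrix.of_apply]
  congr 1
  rw [eq_iff_iff]
  have : fz i + 1 = (((i : ℕ) + 1 : ℕ) : ZMod n) := by push_cast; rfl
  rw [this, fz, ZMod.natCast_eq_natCast_iff', Nat.mod_eq_of_lt j.2]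

lemma Xinv_eq (d : ℕ) : (Xmat n d)⁻¹ = Mm 0 (fun j => om n d (-j)) := by
  apply Matrix.inv_eq_right_inv
  rw [Xmat_eq, Mm_mul, Mm_one]
  congr 1
  · simp
  · funext j; rw [← om_add]; simp [om_zero]

lemma Yinv_eq : (Ymat n)⁻¹ = Mm (-1) (fun _ => 1) := by
  apply Matrix.inv_eq_right_inv
  rw [Ymat_eq, Mm_mul, Mm_one]
  congr 1 <;> simp

/-- `Z` indexed by `ZMod n`. -/
def Zm (d : ℕ) (a : ZMod n × ZMod n) : Matrix (Fin n) (Fin n) ℂ :=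
  Mm a.1 (fun j => om n d (-(a.2 * j)))

/-- The dual of `Z` indexed by `ZMod n`. -/
def Zd (d : ℕ) (a : ZMod n × ZMod n) : Matrix (Fin n) (Fin n) ℂ :=
  Mm (-a.1) (fun j => (n : ℂ)⁻¹ * om n d (a.2 * (j + a.1)))

lemma Zmat_eq (d k l : ℕ) : Zmat n d k l = Zm d ((k : ZMod n), (l : ZMod n)) := by
  rw [Zmat, Xinv_eq, Ymat_eq, Mm_pow0, Mm_pow1, Mm_mul, Zm]
  congr 1
  · simp
  · funext j; rw [om_pow]; simp

lemma Zdual_eq (d k l : ℕ) : Zdual n d k l = Zd d ((k : ZMod n), (l : ZMod n)) := by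
  rw [Zdual, Yinv_eq, Xmat_eq, Mm_pow0, Mm_pow1, Mm_mul, Zd, Mm_smul]
  congr 1
  · simp
  · funext j; rw [om_pow]; simp

lemma Z_mul_Zd (d : ℕ) (a b : ZMod n × ZMod n) :
    Zm d a * Zd d b = ((n : ℂ)⁻¹ * om n d (b.1 * (b.2 - a.2))) • Zm d (a - b) := by
  rw [Zm, Zd, Zm, Mm_mul, Mm_smul]
  congr 1
  · simp [sub_eq_add_neg]
  · funext j
    rw [mul_left_comm, mul_assoc, ← om_add, ← om_add]
    congr 2; simp only [Prod.snd_sub]; ring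

lemma Zd_mul_Zd (d : ℕ) (a b : ZMod n × ZMod n) :
    Zd d b * Zd d (a - b) = ((n : ℂ)⁻¹ * om n d (b.1 * (b.2 - a.2))) • Zd d a := by
  rw [Zd, Zd, Zd, Mm_mul, Mm_smul]
  congr 1
  · simp only [Prod.fst_sub]; ring
  · funext j
    rw [mul_mul_mul_comm, mul_mul_mul_comm (_)⁻¹ _ (_)⁻¹, ← om_add, ← om_add]
    congr 2; simp only [Prod.snd_sub, Prod.fst_sub]; ring

lemma Zd_sub (d : ℕ) (a b : ZMod n × ZMod n) :
    Zd d (b - a) = ((n : ℂ)⁻¹ * om n d ((b.1 - a.1) * (b.2 - a.2))) • Zm d (a - b) := by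
  rw [Zd, Zm, Mm_smul]
  congr 1
  · simp
  · funext j
    rw [mul_assoc, ← om_add]
    congr 2; simp only [Prod.snd_sub, Prod.fst_sub]; ring

lemma Z_mul_Z (d : ℕ) (a b : ZMod n × ZMod n) :
    Zm d (b - a) * Zm d a = om n d (a.1 * (b.2 - a.2)) • Zm d b := by
  rw [Zm, Zm, Zm, Mm_mul, Mm_smul]
  congr 1
  · simp
  · funext j
    rw [← om_add, ← om_add]
    congr 1; simp only [Prod.snd_sub]; ring

/-- The common tensor. -/
def TT (d : ℕ) (a b : ZMod n × ZMod n) :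
    Matrix ((Fin n × Fin n) × Fin n) ((Fin n × Fin n) × Fin n) ℂ :=
  ((n : ℂ)⁻¹ * om n d (b.1 * (b.2 - a.2))) • ((Zd d a ⊗ₖ Zm d (a - b)) ⊗ₖ Zm d b)

lemma TT1 (d : ℕ) (a b : ZMod n × ZMod n) :
    ((Zd d a ⊗ₖ Zm d a) ⊗ₖ (1 : Matrix (Fin n) (Fin n) ℂ)) *
      (((1 : Matrix (Fin n) (Fin n) ℂ) ⊗ₖ Zd d b) ⊗ₖ Zm d b) = TT d a b := by
  rw [← Matrix.mul_kronecker_mul, ← Matrix.mul_kronecker_mul, mul_one, one_mul, Z_mul_Zd,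
    Matrix.kronecker_smul, Matrix.smul_kronecker, TT]

lemma TT2 (d : ℕ) (a b : ZMod n × ZMod n) :
    ((Zd d b ⊗ₖ (1 : Matrix (Fin n) (Fin n) ℂ)) ⊗ₖ Zm d b) *
      ((Zd d (a - b) ⊗ₖ Zm d (a - b)) ⊗ₖ (1 : Matrix (Fin n) (Fin n) ℂ)) = TT d a b := by
  rw [← Matrix.mul_kronecker_mul, ← Matrix.mul_kronecker_mul, mul_one, one_mul, Zd_mul_Zd,
    Matrix.smul_kronecker, Matrix.smul_kronecker, TT]

lemma TT3 (d : ℕ) (a b : ZMod n × ZMod n) :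
    (((1 : Matrix (Fin n) (Fin n) ℂ) ⊗ₖ Zd d (b - a)) ⊗ₖ Zm d (b - a)) *
      ((Zd d a ⊗ₖ (1 : Matrix (Fin n) (Fin n) ℂ)) ⊗ₖ Zm d a) = TT d a b := by
  rw [← Matrix.mul_kronecker_mul, ← Matrix.mul_kronecker_mul, mul_one, one_mul, Zd_sub, Z_mul_Z,
    Matrix.kronecker_smul, Matrix.kronecker_smul, Matrix.smul_kronecker, smul_smul, TT, mul_left_comm,
    ← om_add]
  congr 3
  ring

/-- Coefficients indexed by `ZMod n`. -/
def cM (d : ℕ) (τ : ℂ) (a : ZMod n × ZMod n) (w x : ℂ) : ℂ :=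
  cZ n d τ (a.1.val : ℤ) (a.2.val : ℤ) w x

lemma cM_eq (d : ℕ) {τ : ℂ} (hτ : 0 < τ.im) (k l : ℤ) (w x : ℂ) :
    cM d τ ((k : ZMod n), (l : ZMod n)) w x = cZ n d τ k l w x := by
  unfold cM
  apply cZ_congr n d (NeZero.ne n) hτ <;> simp

lemma ckl_eq (d : ℕ) {τ : ℂ} (hτ : 0 < τ.im) (k l : ℕ) (w x : ℂ) :
    ckl n d τ k l w x = cM d τ ((k : ZMod n), (l : ZMod n)) w x := by
  have := cM_eq (n := n) d hτ k l w x
  push_cast at this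
  rw [this, ckl, cZ]
  push_cast
  rfl

lemma sum_fin_zmod {M : Type*} [AddCommMonoid M] (F : ZMod n × ZMod n → M) :
    ∑ p : Fin n × Fin n, F (((p.1.1 + 1 : ℕ) : ZMod n), ((p.2.1 + 1 : ℕ) : ZMod n)) =
      ∑ a, F a := by
  have hb : Function.Bijective (fun i : Fin n => ((i.1 + 1 : ℕ) : ZMod n)) := by
    have : (fun i : Fin n => ((i.1 + 1 : ℕ) : ZMod n)) = (Equiv.addRight 1) ∘ fz := by
      funext i; simp [fz]
    rw [this]
    exact (Equiv.bijective _).comp fz_bij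
  exact (hb.prodMap hb).sum_comp F

lemma r12_eq (d : ℕ) {τ : ℂ} (hτ : 0 < τ.im) (w x : ℂ) : r12 n d τ w x =
    ∑ a : ZMod n × ZMod n, cM d τ a w x •
      ((Zd d a ⊗ₖ Zm d a) ⊗ₖ (1 : Matrix (Fin n) (Fin n) ℂ)) := by
  rw [r12, ← sum_fin_zmod]
  simp only [ckl_eq d hτ, Zmat_eq, Zdual_eq]

lemma r13_eq (d : ℕ) {τ : ℂ} (hτ : 0 < τ.im) (w x : ℂ) : r13 n d τ w x =
    ∑ a : ZMod n × ZMod n, cM d τ a w x •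
      ((Zd d a ⊗ₖ (1 : Matrix (Fin n) (Fin n) ℂ)) ⊗ₖ Zm d a) := by
  rw [r13, ← sum_fin_zmod]
  simp only [ckl_eq d hτ, Zmat_eq, Zdual_eq]

lemma r23_eq (d : ℕ) {τ : ℂ} (hτ : 0 < τ.im) (w x : ℂ) : r23 n d τ w x =
    ∑ a : ZMod n × ZMod n, cM d τ a w x •
      (((1 : Matrix (Fin n) (Fin n) ℂ) ⊗ₖ Zd d a) ⊗ₖ Zm d a) := by
  rw [r23, ← sum_fin_zmod]
  simp only [ckl_eq d hτ, Zmat_eq, Zdual_eq]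

end mats

/-- The elliptic `r`-matrix satisfies the associative Yang–Baxter equation. -/
theorem stmt13 (n d : ℕ) (hd : 0 < d) (hdn : d < n) (hcop : Nat.gcd d n = 1)
    (τ : ℂ) (hτ : 0 < τ.im) (u v x₁ x₂ x₃ : ℂ)
    (h21 : theta1 τ (x₂ - x₁) ≠ 0) (h32 : theta1 τ (x₃ - x₂) ≠ 0)
    (h31 : theta1 τ (x₃ - x₁) ≠ 0)
    (hpol : ∀ w ∈ ({u, v, -v, u + v} : Set ℂ), ∀ k l : ℕ,
      1 ≤ k → k ≤ n → 1 ≤ l → l ≤ n →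
      theta1 τ (w + ((d : ℂ) / n) * (k * τ + l)) ≠ 0) :
    r12 n d τ u (x₂ - x₁) * r23 n d τ (u + v) (x₃ - x₂)
      = r13 n d τ (u + v) (x₃ - x₁) * r12 n d τ (-v) (x₂ - x₁) +
        r23 n d τ v (x₃ - x₂) * r13 n d τ u (x₃ - x₁) := by
  have hn : n ≠ 0 := by omega
  haveI : NeZero n := ⟨hn⟩
  have hu := pol_int n d hn hτ u (hpol u (by simp))
  have hv := pol_int n d hn hτ (-v) (hpol (-v) (by simp))
  have huv := pol_int n d hn hτ (u + v) (hpol (u + v) (by simp))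
  obtain ⟨x, hx⟩ : ∃ x, x = x₂ - x₁ := ⟨_, rfl⟩
  obtain ⟨y, hy⟩ : ∃ y, y = x₃ - x₂ := ⟨_, rfl⟩
  have hxy : x₃ - x₁ = x + y := by rw [hx, hy]; ring
  rw [hxy, ← hx, ← hy]
  rw [hxy] at h31
  rw [← hx] at h21
  rw [← hy] at h32
  have F : ∀ a b : ZMod n × ZMod n, cM d τ a u x * cM d τ b (u + v) y =
      cM d τ b (u + v) (x + y) * cM d τ (a - b) (-v) x +
      cM d τ (b - a) v y * cM d τ a u (x + y) := by
    intro a b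
    have h := fay_cZ n d hτ u v x y h21 h32 h31 hu huv hv a.1.val a.2.val b.1.val b.2.val
    simpa [← cM_eq d hτ, ← Prod.mk_sub_mk] using h
  rw [r12_eq d hτ, r12_eq d hτ, r13_eq d hτ, r13_eq d hτ, r23_eq d hτ, r23_eq d hτ]
  simp only [Finset.sum_mul_sum, smul_mul_smul_comm]
  have s2 : ∀ G : ZMod n × ZMod n → ZMod n × ZMod n →
      Matrix ((Fin n × Fin n) × Fin n) ((Fin n × Fin n) × Fin n) ℂ,
      ∑ a, ∑ b, G a b = ∑ a, ∑ b, G b (a - b) := by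
    intro G
    rw [Finset.sum_comm (f := fun a b => G b (a - b))]
    refine Finset.sum_congr rfl fun a _ => ?_
    exact ((Equiv.subRight a).sum_comp (G a)).symm
  have s3 : ∀ G : ZMod n × ZMod n → ZMod n × ZMod n →
      Matrix ((Fin n × Fin n) × Fin n) ((Fin n × Fin n) × Fin n) ℂ,
      ∑ a, ∑ b, G a b = ∑ a, ∑ b, G (b - a) a := by
    intro G
    rw [Finset.sum_comm]
    refine Finset.sum_congr rfl fun a _ => ?_
    exact ((Equiv.subRight a).sum_comp (fun c => G c a)).symm
  rw [s2 (fun a b => (cM d τ a (u + v) (x + y) * cM d τ b (-v) x) • _),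
    s3 (fun a b => (cM d τ a v y * cM d τ b u (x + y)) • _), ← Finset.sum_add_distrib]
  refine Finset.sum_congr rfl fun a _ => ?_
  rw [← Finset.sum_add_distrib]
  refine Finset.sum_congr rfl fun b _ => ?_
  rw [TT1, TT2, TT3, F, add_smul]
end
end
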